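/- With U_k ∈ M_k(C(T)) the unitary defined by (U_k)_{1,k}(z) = z, (U_k)_{j+1,j}(z) = 1 for 1 ≤ j ≤ k-1, and zeros elsewhere: if (λ_l)_{l∈ℤ} ∈ ℓ¹(ℤ) satisfies Σ_{l∈ℤ} λ_l U_k^l = 0 in M_k(C(T)), then λ_l = 0 for all l ∈ ℤ. Consequently the map sending z^l to U_k^l extends to a *-monomorphism π_k : C(T) → M_k(C(T)). -/

import Mathlib

/-- The character `z ↦ z^l` on the unit circle, as a continuous function. -/
noncomputable def circleChar (n : ℤ) : C(Circle, ℂ) :=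
  ⟨fun z => ((z ^ n : Circle) : ℂ), continuous_subtype_val.comp (continuous_zpow n)⟩

/-- The shift-type matrix `U_k ∈ M_k(C(𝕋))`. -/
noncomputable def shiftUnitary (k : ℕ) : Matrix (Fin k) (Fin k) C(Circle, ℂ) :=
  fun i j =>
    if (i : ℕ) = 0 ∧ (j : ℕ) = k - 1 then ⟨fun z => (z : ℂ), continuous_subtype_val⟩
    else if (i : ℕ) = (j : ℕ) + 1 then 1 else 0

/-!
Evaluated at `w ^ k`, the matrix `U_k` has the eigenvector `(w⁻ʲ)`, `0 ≤ j < k`, with eigenvalue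
`w`. Hence the spectrum of the unitary `U_k` is the whole circle, and the continuous functional
calculus is an injective continuous *-homomorphism `π` on `C(𝕋)` with `π (z ^ l) = U_k ^ l`. It maps
`∑ λ_l z ^ l` to `∑ λ_l U_k ^ l`, so if the latter vanishes then so does the former, and with it its
Fourier coefficients `λ_l`.
-/

section Characters

lemma circleChar_apply (l : ℤ) (z : Circle) : circleChar l z = (z : ℂ) ^ l :=
  rfl

lemma circleChar_mem_unitary (l : ℤ) : circleChar l ∈ unitary C(Circle, ℂ) := by
  rw [Unitary.mem_iff_star_mul_self]
  ext z
  simp [circleChar_apply, Complex.conj_mul', ← mul_zpow, Circle.norm_coe]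

/-- The homomorphism `l ↦ z ^ l` from `ℤ`, written multiplicatively, to the unitary group of
`C(𝕋)`. It reduces statements about all characters to the case `l = 1`. -/
noncomputable def circleCharHom : Multiplicative ℤ →* unitary C(Circle, ℂ) where
  toFun l := ⟨circleChar l.toAdd, circleChar_mem_unitary _⟩
  map_one' := by ext z; simp [circleChar_apply]
  map_mul' l m := by ext z; simp [circleChar_apply, zpow_add₀]

lemma map_circleChar {F A : Type*} [Monoid A] [StarMul A] [FunLike F C(Circle, ℂ) A]
    [MonoidHomClass F C(Circle, ℂ) A] [StarHomClass F C(Circle, ℂ) A]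
    (π : F) (u : unitary A) (h : π (circleChar 1) = u) (l : ℤ) :
    π (circleChar l) = (u ^ l : unitary A) := by
  let ρ : Multiplicative ℤ →* unitary A := (Unitary.map (.ofClass π)).toMonoidHom.comp circleCharHom
  have hρ_one : ρ (.ofAdd 1) = u := Subtype.ext h
  have hρ : ρ (.ofAdd l) = u ^ l := by
    rw [← hρ_one, ← map_zpow, ← ofAdd_zsmul, smul_eq_mul, mul_one]
  exact congrArg Subtype.val hρ

lemma norm_circleChar_le_one (l : ℤ) : ‖circleChar l‖ ≤ 1 :=
  (ContinuousMap.norm_le _ zero_le_one).mpr fun z => (Circle.norm_coe (z ^ l)).le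

lemma summable_smul_circleChar {c : ℤ → ℂ} (hc : Summable fun l => ‖c l‖) :
    Summable fun l => c l • circleChar l :=
  hc.of_norm_bounded fun l => by
    simpa only [norm_smul] using
      mul_le_of_le_one_right (norm_nonneg (c l)) (norm_circleChar_le_one l)

end Characters

section FourierCoefficients

lemma inner_eq_of_hasSum_smul {𝕜 E ι : Type*} [RCLike 𝕜] [SeminormedAddCommGroup E]
    [InnerProductSpace 𝕜 E] {v : ι → E} (hv : Orthonormal 𝕜 v) {c : ι → 𝕜} {x : E}
    (h : HasSum (fun i => c i • v i) x) (i : ι) : inner 𝕜 (v i) x = c i := by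
  classical
  have hterm (j : ι) : innerSL 𝕜 (v i) (c j • v j) = if j = i then c i else 0 := by
    rw [innerSL_apply_apply, inner_smul_right, orthonormal_iff_ite.mp hv]
    grind
  have hsum := h.mapL (innerSL 𝕜 (v i))
  simp only [hterm] at hsum
  exact hsum.unique (hasSum_ite_eq i (c i))

lemma fourierCoeff_eq_of_hasSum_smul {T : ℝ} [Fact (0 < T)] {c : ℤ → ℂ} {f : C(AddCircle T, ℂ)}
    (h : HasSum (fun l => c l • fourier l) f) (m : ℤ) : fourierCoeff f m = c m := by
  rw [← fourierCoeff_toLp, ← fourierBasis_repr, HilbertBasis.repr_apply_apply, coe_fourierBasis]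
  refine inner_eq_of_hasSum_smul orthonormal_fourier ?_ m
  simpa only [map_smul] using h.mapL (ContinuousMap.toLp 2 AddCircle.haarAddCircle ℂ)

lemma circleChar_comp_toCircle {T : ℝ} (l : ℤ) :
    (circleChar l).comp ⟨AddCircle.toCircle, AddCircle.continuous_toCircle⟩ =
      fourier (T := T) l := by
  ext x
  simp [circleChar_apply, fourier_apply, AddCircle.toCircle_zsmul]

lemma eq_zero_of_hasSum_smul_circleChar {c : ℤ → ℂ}
    (h : HasSum (fun l => c l • circleChar l) 0) (m : ℤ) : c m = 0 := by
  let toCircle : C(UnitAddCircle, Circle) := ⟨AddCircle.toCircle, AddCircle.continuous_toCircle⟩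
  have hfourier : HasSum (fun l => c l • fourier l) (0 : C(UnitAddCircle, ℂ)) := by
    simpa only [Function.comp_def, map_smul, map_zero, ContinuousMap.compStarAlgHom'_apply,
      toCircle, circleChar_comp_toCircle] using
      h.map (ContinuousMap.compStarAlgHom' ℂ ℂ toCircle) (ContinuousMap.continuous_precomp _)
  rw [← fourierCoeff_eq_of_hasSum_smul hfourier m]
  simp [fourierCoeff]

lemma eq_zero_of_tsum_smul_map_circleChar_eq_zero {F E : Type*} [AddCommGroup E] [Module ℂ E]
    [TopologicalSpace E] [T2Space E] [FunLike F C(Circle, ℂ) E]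
    [LinearMapClass F ℂ C(Circle, ℂ) E] {φ : F} (hcont : Continuous φ)
    (hinj : Function.Injective φ) {c : ℤ → ℂ} (hc : Summable fun l => ‖c l‖)
    (h : ∑' l, c l • φ (circleChar l) = 0) (m : ℤ) : c m = 0 := by
  have hsum := (summable_smul_circleChar hc).hasSum
  have hmap : φ (∑' l, c l • circleChar l) = 0 := by
    rw [← h, ← (hsum.map φ hcont).tsum_eq]
    simp only [Function.comp_def, map_smul]
  rw [(map_eq_zero_iff φ hinj).mp hmap] at hsum
  exact eq_zero_of_hasSum_smul_circleChar hsum m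

end FourierCoefficients

section FunctionalCalculus

variable {A : Type*} [CStarAlgebra A]

/-- The inclusion of the spectrum of a unitary into the circle. -/
def spectrumToCircle (u : unitary A) : C(spectrum ℂ (u : A), Circle) :=
  ⟨fun x => ⟨x, Unitary.spectrum_subset_circle u x.2⟩, by fun_prop⟩

lemma coe_spectrumToCircle_apply (u : unitary A) (x : spectrum ℂ (u : A)) :
    (spectrumToCircle u x : ℂ) = x :=
  rfl

/-- The continuous functional calculus of a unitary, on functions defined on the whole circle
rather than only on the spectrum. -/
noncomputable def unitaryCfcHom (u : unitary A) : C(Circle, ℂ) →⋆ₐ[ℂ] A :=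
  (cfcHom (Unitary.coe_isStarNormal u)).comp
    (ContinuousMap.compStarAlgHom' ℂ ℂ (spectrumToCircle u))

lemma unitaryCfcHom_continuous (u : unitary A) : Continuous (unitaryCfcHom u) :=
  (cfcHom_continuous _).comp (ContinuousMap.continuous_precomp _)

lemma unitaryCfcHom_circleChar_one (u : unitary A) : unitaryCfcHom u (circleChar 1) = u := by
  have hid : (circleChar 1).comp (spectrumToCircle u) =
      (ContinuousMap.id ℂ).restrict (spectrum ℂ (u : A)) := by
    ext x
    simp [circleChar_apply, coe_spectrumToCircle_apply]
  exact (congrArg _ hid).trans (cfcHom_id _)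

lemma unitaryCfcHom_injective {u : unitary A} (hu : ∀ w : Circle, (w : ℂ) ∈ spectrum ℂ (u : A)) :
    Function.Injective (unitaryCfcHom u) := by
  refine (cfcHom_injective _).comp fun f g hfg => ?_
  ext w
  exact DFunLike.congr_fun hfg ⟨w, hu w⟩

lemma exists_continuous_injective_starAlgHom_circleChar {n : Type*} [Fintype n] [DecidableEq n]
    (u : unitary (Matrix n n A)) (hu : ∀ w : Circle, (w : ℂ) ∈ spectrum ℂ (u : Matrix n n A)) :
    ∃ π : C(Circle, ℂ) →⋆ₐ[ℂ] Matrix n n A,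
      Continuous π ∧ Function.Injective π ∧ ∀ l, π (circleChar l) = (u ^ l : unitary _) := by
  -- `Matrix n n A` has no norm of its own. `CStarMatrix n n A` has the same topology and a C⋆-norm,
  -- whose construction needs an order on `A`.
  let := CStarAlgebra.spectralOrder A
  have := CStarAlgebra.spectralOrderedRing A
  let e : Matrix n n A ≃⋆ₐ[ℂ] CStarMatrix n n A := CStarMatrix.ofMatrixStarAlgEquiv
  let v : unitary (CStarMatrix n n A) := Unitary.map (.ofClass e) u
  have hv (w : Circle) : (w : ℂ) ∈ spectrum ℂ (v : CStarMatrix n n A) :=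
    (AlgEquiv.spectrum_eq e (u : Matrix n n A)).symm ▸ hu w
  let π : C(Circle, ℂ) →⋆ₐ[ℂ] Matrix n n A := (e.symm : _ →⋆ₐ[ℂ] _).comp (unitaryCfcHom v)
  have hπ : π (circleChar 1) = u :=
    (congrArg e.symm (unitaryCfcHom_circleChar_one v)).trans (e.symm_apply_apply _)
  exact ⟨π, CStarMatrix.ofMatrixL.symm.continuous.comp (unitaryCfcHom_continuous v),
    e.symm.injective.comp (unitaryCfcHom_injective hv), map_circleChar π u hπ⟩

end FunctionalCalculus

section Spectrum

open Matrix

lemma mem_spectrum_of_mulVec_eq_smul {R n : Type*} [CommRing R] [Fintype n] [DecidableEq n]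
    {M : Matrix n n R} {μ : R} {v : n → R} (hv : v ≠ 0) (h : M *ᵥ v = μ • v) :
    μ ∈ spectrum R M := by
  rw [← Matrix.spectrum_toLin']
  have hvec : Module.End.HasEigenvector (Matrix.toLin' M) μ v :=
    ⟨Module.End.mem_eigenspace_iff.mpr h, hv⟩
  exact (Module.End.hasEigenvalue_of_hasEigenvector hvec).mem_spectrum

lemma mem_spectrum_of_map_mulVec_eq_smul {R A n : Type*} [CommRing R] [Ring A] [Algebra R A]
    [Fintype n] [DecidableEq n] (φ : A →ₐ[R] R) {M : Matrix n n A} {μ : R} {v : n → R}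
    (hv : v ≠ 0) (h : M.map φ *ᵥ v = μ • v) : μ ∈ spectrum R M :=
  AlgHom.spectrum_apply_subset φ.mapMatrix M (mem_spectrum_of_mulVec_eq_smul hv h)

lemma shiftUnitary_zero_apply (n : ℕ) (j : Fin (n + 1)) :
    shiftUnitary (n + 1) 0 j = if j = Fin.last n then circleChar 1 else 0 := by
  have hchar : circleChar 1 = ⟨fun z => (z : ℂ), continuous_subtype_val⟩ := by
    ext z
    exact zpow_one (z : ℂ)
  simp only [shiftUnitary, hchar, Fin.ext_iff, Fin.val_zero, Fin.val_last, true_and,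
    Nat.add_sub_cancel, (Nat.succ_ne_zero _).symm, if_false]

lemma shiftUnitary_succ_apply (n : ℕ) (i : Fin n) (j : Fin (n + 1)) :
    shiftUnitary (n + 1) i.succ j = if j = i.castSucc then 1 else 0 := by
  simp [shiftUnitary, Fin.ext_iff, eq_comm]

lemma shiftUnitary_map_eval_mulVec (n : ℕ) (z : Circle) (v : Fin (n + 1) → ℂ) :
    (shiftUnitary (n + 1)).map (fun f => f z) *ᵥ v =
      Fin.cons ((z : ℂ) * v (Fin.last n)) (Fin.init v) := by
  have heval (p : Prop) [Decidable p] (f : C(Circle, ℂ)) :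
      (if p then f else 0) z = if p then f z else 0 := by
    split_ifs <;> rfl
  ext i
  cases i using Fin.cases with
  | zero => simp [mulVec, dotProduct, shiftUnitary_zero_apply, heval, circleChar_apply]
  | succ i => simp [mulVec, dotProduct, shiftUnitary_succ_apply, heval, Fin.init]

lemma shiftUnitary_map_eval_pow_mulVec (n : ℕ) (w : Circle) :
    (shiftUnitary (n + 1)).map (fun f => f (w ^ (n + 1))) *ᵥ (fun j => ((w : ℂ) ^ (j : ℕ))⁻¹) =
      (w : ℂ) • fun j : Fin (n + 1) => ((w : ℂ) ^ (j : ℕ))⁻¹ := by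
  rw [shiftUnitary_map_eval_mulVec]
  ext i
  cases i using Fin.cases <;> simp [Fin.init, pow_succ', mul_comm]

lemma coe_mem_spectrum_shiftUnitary (n : ℕ) (w : Circle) :
    (w : ℂ) ∈ spectrum ℂ (shiftUnitary (n + 1)) := by
  have hv : (fun j : Fin (n + 1) => ((w : ℂ) ^ (j : ℕ))⁻¹) ≠ 0 :=
    Function.ne_iff.mpr ⟨0, by simp⟩
  exact mem_spectrum_of_map_mulVec_eq_smul
    (ContinuousMap.evalStarAlgHom ℂ ℂ (w ^ (n + 1))).toAlgHom hv
    (shiftUnitary_map_eval_pow_mulVec n w)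

end Spectrum

/-- Integer powers of `U_k` are ℓ¹-independent, and consequently `z^l ↦ U_k^l` extends to
a *-monomorphism `π_k : C(𝕋) → M_k(C(𝕋))`. -/
theorem shiftUnitary_ell1_independent_and_monomorphism (k : ℕ) (hk : 1 ≤ k)
    (hU : shiftUnitary k ∈ unitary (Matrix (Fin k) (Fin k) C(Circle, ℂ))) :
    (∀ lam : ℤ → ℂ, Summable (fun l => ‖lam l‖) →
      ∑' l : ℤ, lam l • (((⟨shiftUnitary k, hU⟩ :
          unitary (Matrix (Fin k) (Fin k) C(Circle, ℂ))) ^ l :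
          unitary (Matrix (Fin k) (Fin k) C(Circle, ℂ))) :
          Matrix (Fin k) (Fin k) C(Circle, ℂ)) = 0 → ∀ l, lam l = 0) ∧
    ∃ π : C(Circle, ℂ) →⋆ₐ[ℂ] Matrix (Fin k) (Fin k) C(Circle, ℂ),
      Function.Injective π ∧
      ∀ l : ℤ, π (circleChar l) =
        (((⟨shiftUnitary k, hU⟩ :
            unitary (Matrix (Fin k) (Fin k) C(Circle, ℂ))) ^ l :
            unitary (Matrix (Fin k) (Fin k) C(Circle, ℂ))) :
            Matrix (Fin k) (Fin k) C(Circle, ℂ)) := by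
  obtain ⟨n, rfl⟩ := Nat.exists_eq_add_of_le' hk
  obtain ⟨π, hcont, hinj, hchar⟩ := exists_continuous_injective_starAlgHom_circleChar
    ⟨shiftUnitary (n + 1), hU⟩ (coe_mem_spectrum_shiftUnitary n)
  refine ⟨fun lam hlam hsum => ?_, π, hinj, hchar⟩
  simp only [← hchar] at hsum
  exact eq_zero_of_tsum_smul_map_circleChar_eq_zero hcont hinj hlam hsum
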